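/- Let k be a field of prime characteristic p, let n ≥ 1, and let g be an n × n matrix over k with (g − 1)^p = 0. Then the map φ_g : k → Matrix n n k defined by φ_g(s) = E(s • L(g)) satisfies φ_g(s + t) = φ_g(s) * φ_g(t) for all s, t ∈ k, φ_g(0) = 1, each φ_g(s) is invertible, and φ_g(1) = g. In particular every p-unipotent element of GL_n(k) lies in the image of a one-parameter additive subgroup (saturation for GL_n, Proposition 4.1 of the paper specialized to GL_n). -/

import Mathlib

/-!
By the binomial theorem, `E(x + y) = E(x) E(y)` for commuting `x`, `y` whose monomials of degree at
least `p` vanish. As `L(g)` is a multiple of `g - 1`, its `p`-th power is zero, so `s ↦ E(s L(g))`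
is additive, and in particular `E(-L(g))` is the inverse of `E(L(g))`.

It remains to see that `g` is also inverse to `E(-L(g))`. Formally `(1 + X) exp (-log (1 + X))` has
derivative zero. For the truncated series in `k[X]` this derivative vanishes modulo `X ^ (p - 1)`;
the integers below `p` being invertible in `k`, the product is congruent to its constant
coefficient `1` modulo `X ^ p`, and one evaluates at `X = g - 1`.
-/

/-- The truncated exponential `E(x) = ∑_{i=0}^{p-1} (1/i!) x^i`. -/
noncomputable def truncExp (k : Type*) [Field k] {A : Type*} [Ring A] [Algebra k A]
    (p : ℕ) (x : A) : A :=
  ∑ i ∈ Finset.range p, ((Nat.factorial i : k))⁻¹ • x ^ i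


/-- The truncated logarithm `L(u) = ∑_{i=1}^{p-1} ((-1)^{i+1}/i) (u-1)^i`. -/
noncomputable def truncLog (k : Type*) [Field k] {A : Type*} [Ring A] [Algebra k A]
    (p : ℕ) (u : A) : A :=
  ∑ i ∈ Finset.Icc 1 (p - 1), (((-1 : k) ^ (i + 1)) / (i : k)) • (u - 1) ^ i

section

open Polynomial
open Finset.HasAntidiagonal (antidiagonal mem_antidiagonal)
open scoped Nat

variable {k : Type*} [Field k]

lemma isUnit_natCast_of_isUnit_factorial {R : Type*} [CommSemiring R] {m n : ℕ}
    (hn : IsUnit (n ! : R)) (hm : 0 < m) (hmn : m ≤ n) : IsUnit (m : R) :=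
  isUnit_of_dvd_unit (Nat.cast_dvd_cast (Nat.dvd_factorial hm hmn)) hn

lemma X_pow_succ_dvd_sub_C_of_dvd_derivative {R : Type*} [CommRing R] {N : ℕ}
    (hN : IsUnit (N ! : R)) {f : R[X]} (hf : X ^ N ∣ derivative f) :
    X ^ (N + 1) ∣ f - C (f.coeff 0) := by
  rw [X_pow_dvd_iff] at hf ⊢
  rintro (_ | d) hd
  · rw [coeff_sub, coeff_C_zero, sub_self]
  · have hd_unit : IsUnit ((d + 1 : ℕ) : R) :=
      isUnit_natCast_of_isUnit_factorial hN d.succ_pos (Nat.lt_succ_iff.mp hd)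
    have hcoeff : f.coeff (d + 1) * (d + 1 : ℕ) = 0 := by
      rw [Nat.cast_succ, ← coeff_derivative, hf d (Nat.succ_lt_succ_iff.mp hd)]
    rw [coeff_sub, coeff_C_succ, sub_zero, hd_unit.mul_left_eq_zero.mp hcoeff]

section TruncExp

variable {A B : Type*} [Ring A] [Algebra k A] [Ring B] [Algebra k B] {N : ℕ}

lemma map_truncExp (f : A →ₐ[k] B) (N : ℕ) (x : A) :
    f (truncExp k N x) = truncExp k N (f x) := by
  simp [truncExp]

lemma truncExp_succ (N : ℕ) (x : A) :
    truncExp k (N + 1) x = truncExp k N x + (N ! : k)⁻¹ • x ^ N :=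
  Finset.sum_range_succ _ _

lemma truncExp_succ_zero (N : ℕ) : truncExp k (N + 1) (0 : A) = 1 := by
  simp [truncExp, Finset.sum_range_succ']

lemma inv_factorial_smul_add_pow_of_commute {n : ℕ} (hn : IsUnit (n ! : k)) {x y : A}
    (hxy : Commute x y) :
    (n ! : k)⁻¹ • (x + y) ^ n = ∑ ij ∈ antidiagonal n,
      ((ij.1 ! : k)⁻¹ • x ^ ij.1) * ((ij.2 ! : k)⁻¹ • y ^ ij.2) := by
  rw [hxy.add_pow', Finset.smul_sum]
  refine Finset.sum_congr rfl fun ij hij => ?_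
  rw [smul_mul_smul_comm, ← Nat.cast_smul_eq_nsmul k, smul_smul, Nat.castChoose_eq hn hij,
    Ring.inverse_eq_inv', mul_assoc, inv_mul_cancel_left₀ hn.ne_zero]

theorem truncExp_add_of_commute (hN : IsUnit (N ! : k)) {x y : A} (hxy : Commute x y)
    (hvanish : ∀ i j, N < i + j → x ^ i * y ^ j = 0) :
    truncExp k (N + 1) (x + y) = truncExp k (N + 1) x * truncExp k (N + 1) y := by
  let summand (ij : ℕ × ℕ) : A := ((ij.1 ! : k)⁻¹ • x ^ ij.1) * ((ij.2 ! : k)⁻¹ • y ^ ij.2)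
  let box := Finset.range (N + 1) ×ˢ Finset.range (N + 1)
  let triangle := box.filter fun ij => ij.1 + ij.2 ∈ Finset.range (N + 1)
  have antidiagonal_eq_fiber : ∀ n ∈ Finset.range (N + 1),
      antidiagonal n = triangle.filter fun ij => ij.1 + ij.2 = n := by
    intro n hn
    ext ⟨i, j⟩
    simp only [triangle, box, mem_antidiagonal, Finset.mem_filter, Finset.mem_product,
      Finset.mem_range] at hn ⊢
    omega
  calc truncExp k (N + 1) (x + y)
      = ∑ n ∈ Finset.range (N + 1), ∑ ij ∈ antidiagonal n, summand ij :=
        Finset.sum_congr rfl fun n hn => inv_factorial_smul_add_pow_of_commute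
          (hN.natCast_factorial_of_le (Finset.mem_range_succ_iff.mp hn)) hxy
    _ = ∑ n ∈ Finset.range (N + 1), ∑ ij ∈ triangle with ij.1 + ij.2 = n, summand ij :=
        Finset.sum_congr rfl fun n hn => by rw [antidiagonal_eq_fiber n hn]
    _ = ∑ ij ∈ triangle, summand ij :=
        Finset.sum_fiberwise_of_maps_to (fun ij hij => (Finset.mem_filter.mp hij).2) summand
    _ = ∑ ij ∈ box, summand ij := by
        refine Finset.sum_filter_of_ne fun ij _ hne => ?_
        contrapose! hne
        rw [Finset.mem_range_succ_iff, not_le] at hne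
        simp only [summand, smul_mul_smul_comm, hvanish _ _ hne, smul_zero]
    _ = truncExp k (N + 1) x * truncExp k (N + 1) y := by
        rw [truncExp, truncExp, Finset.sum_mul_sum, Finset.sum_product]

lemma truncExp_add_smul (hN : IsUnit (N ! : k)) {x : A} (hx : x ^ (N + 1) = 0) (s t : k) :
    truncExp k (N + 1) ((s + t) • x) =
      truncExp k (N + 1) (s • x) * truncExp k (N + 1) (t • x) := by
  rw [add_smul]
  refine truncExp_add_of_commute hN (((Commute.refl x).smul_left s).smul_right t) fun i j hij => ?_
  rw [_root_.smul_pow, _root_.smul_pow, smul_mul_smul_comm, ← pow_add,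
    pow_eq_zero_of_le hij hx, smul_zero]

lemma truncExp_mul_truncExp_neg (hN : IsUnit (N ! : k)) {x : A} (hx : x ^ (N + 1) = 0) :
    truncExp k (N + 1) x * truncExp k (N + 1) (-x) = 1 := by
  simpa only [add_neg_cancel, zero_smul, truncExp_succ_zero, one_smul, neg_smul, eq_comm]
    using truncExp_add_smul hN hx 1 (-1)

lemma truncExp_neg_mul_truncExp (hN : IsUnit (N ! : k)) {x : A} (hx : x ^ (N + 1) = 0) :
    truncExp k (N + 1) (-x) * truncExp k (N + 1) x = 1 := by
  simpa only [neg_neg] using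
    truncExp_mul_truncExp_neg hN (x := -x) (by rw [neg_pow, hx, mul_zero])

lemma isUnit_truncExp (hN : IsUnit (N ! : k)) {x : A} (hx : x ^ (N + 1) = 0) :
    IsUnit (truncExp k (N + 1) x) :=
  isUnit_iff_exists.mpr
    ⟨_, truncExp_mul_truncExp_neg hN hx, truncExp_neg_mul_truncExp hN hx⟩

lemma derivative_truncExp (hN : IsUnit (N ! : k)) (f : k[X]) :
    derivative (truncExp k (N + 1) f) = truncExp k N f * derivative f := by
  rw [truncExp, Finset.sum_range_succ', derivative_add, derivative_sum, truncExp, Finset.sum_mul]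
  simp only [pow_zero, derivative_smul, derivative_one, smul_zero, add_zero]
  refine Finset.sum_congr rfl fun i hi => ?_
  have hi0 : ((i + 1 : ℕ) : k) ≠ 0 :=
    (isUnit_natCast_of_isUnit_factorial hN i.succ_pos (Finset.mem_range.mp hi)).ne_zero
  have hfactorial : ((i + 1)! : k)⁻¹ * (i + 1 : ℕ) = (i ! : k)⁻¹ := by
    rw [Nat.factorial_succ, Nat.cast_mul, mul_inv_rev, inv_mul_cancel_right₀ hi0]
  rw [derivative_pow_succ, ← hfactorial, ← Nat.cast_succ]
  simp only [smul_eq_C_mul, C_mul]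
  ring

end TruncExp

section TruncLog

variable {A B : Type*} [Ring A] [Algebra k A] [Ring B] [Algebra k B] {N : ℕ}

lemma map_truncLog (f : A →ₐ[k] B) (N : ℕ) (u : A) :
    f (truncLog k N u) = truncLog k N (f u) := by
  simp [truncLog]

lemma aeval_truncLog_one_add_X (N : ℕ) (u : A) :
    aeval (u - 1) (truncLog k N (1 + X : k[X])) = truncLog k N u := by
  rw [map_truncLog, map_add, map_one, aeval_X, add_sub_cancel]

lemma X_dvd_truncLog_one_add_X (N : ℕ) : X ∣ truncLog k N (1 + X : k[X]) := by
  refine Finset.dvd_sum fun i hi => ?_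
  have hi0 : i ≠ 0 := Nat.one_le_iff_ne_zero.mp (Finset.mem_Icc.mp hi).1
  rw [add_sub_cancel_left]
  exact dvd_smul_of_dvd _ (dvd_pow_self X hi0)

lemma truncLog_pow_eq_zero {u : A} {m : ℕ} (hu : (u - 1) ^ m = 0) (N : ℕ) :
    truncLog k N u ^ m = 0 := by
  rw [← aeval_truncLog_one_add_X, ← map_pow]
  exact aeval_eq_zero_of_dvd_aeval_eq_zero
    (pow_dvd_pow_of_dvd (X_dvd_truncLog_one_add_X N) m) (by rw [map_pow, aeval_X, hu])

lemma truncLog_succ_eq_sum_range (N : ℕ) (u : A) :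
    truncLog k (N + 1) u =
      ∑ i ∈ Finset.range N, ((-1 : k) ^ i / (i + 1 : ℕ)) • (u - 1) ^ (i + 1) := by
  rw [truncLog, Nat.add_sub_cancel, ← Finset.Ico_add_one_right_eq_Icc,
    ← Finset.sum_Ico_add' _ 0 N 1, ← Finset.range_eq_Ico]
  simp only [pow_succ _ (_ + 1), pow_succ (-1 : k), mul_neg_one, neg_neg]

lemma derivative_truncLog_one_add_X (hN : IsUnit (N ! : k)) :
    derivative (truncLog k (N + 1) (1 + X : k[X])) = ∑ i ∈ Finset.range N, (-X) ^ i := by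
  rw [truncLog_succ_eq_sum_range, derivative_sum]
  refine Finset.sum_congr rfl fun i hi => ?_
  have hi0 : ((i + 1 : ℕ) : k) ≠ 0 :=
    (isUnit_natCast_of_isUnit_factorial hN i.succ_pos (Finset.mem_range.mp hi)).ne_zero
  rw [add_sub_cancel_left, derivative_smul, derivative_X_pow_succ, ← Nat.cast_succ,
    smul_eq_C_mul, ← mul_assoc, ← C_mul, div_mul_cancel₀ _ hi0, C_pow, C_neg, C_1,
    neg_pow (X : k[X])]

lemma one_add_X_mul_derivative_truncLog (hN : IsUnit (N ! : k)) :
    (1 + X) * derivative (truncLog k (N + 1) (1 + X : k[X])) = 1 - (-X) ^ N := by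
  rw [derivative_truncLog_one_add_X hN, ← sub_neg_eq_add, mul_neg_geom_sum]

end TruncLog

section Inverse

variable {A : Type*} [Ring A] [Algebra k A] {N : ℕ}

lemma X_pow_dvd_derivative_mul_truncExp_neg_truncLog (hN : IsUnit (N ! : k)) :
    X ^ N ∣ derivative ((1 + X) * truncExp k (N + 1) (-truncLog k (N + 1) (1 + X : k[X]))) := by
  set l : k[X] := truncLog k (N + 1) (1 + X)
  have hderiv : derivative ((1 + X) * truncExp k (N + 1) (-l)) =
      (N ! : k)⁻¹ • (-l) ^ N + (-X) ^ N * truncExp k N (-l) := by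
    have hl : (1 + X) * derivative l = 1 - (-X) ^ N := one_add_X_mul_derivative_truncLog hN
    rw [derivative_mul, derivative_truncExp hN, derivative_neg, truncExp_succ, derivative_add,
      derivative_one, derivative_X]
    linear_combination -truncExp k N (-l) * hl
  have hX_dvd : X ∣ -l := (X_dvd_truncLog_one_add_X (N + 1)).neg_right
  rw [hderiv]
  exact dvd_add (dvd_smul_of_dvd _ (pow_dvd_pow_of_dvd hX_dvd N))
    ((pow_dvd_pow_of_dvd (dvd_neg.mpr dvd_rfl) N).mul_right _)

lemma coeff_zero_mul_truncExp_neg_truncLog (N : ℕ) :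
    ((1 + X) * truncExp k (N + 1) (-truncLog k (N + 1) (1 + X : k[X]))).coeff 0 = 1 := by
  have hlog : aeval (0 : k) (truncLog k (N + 1) (1 + X : k[X])) = 0 :=
    aeval_eq_zero_of_dvd_aeval_eq_zero (X_dvd_truncLog_one_add_X (N + 1)) (aeval_X 0)
  rw [coeff_zero_eq_aeval_zero, map_mul, map_truncExp, map_neg, hlog, neg_zero,
    truncExp_succ_zero, map_add, map_one, aeval_X, add_zero, mul_one]

lemma mul_truncExp_neg_truncLog (hN : IsUnit (N ! : k)) {u : A} (hu : (u - 1) ^ (N + 1) = 0) :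
    u * truncExp k (N + 1) (-truncLog k (N + 1) u) = 1 := by
  have hdvd := X_pow_succ_dvd_sub_C_of_dvd_derivative hN
    (X_pow_dvd_derivative_mul_truncExp_neg_truncLog hN)
  have heval := aeval_eq_zero_of_dvd_aeval_eq_zero (x := u - 1) hdvd
    (by rw [map_pow, aeval_X, hu])
  rwa [coeff_zero_mul_truncExp_neg_truncLog, map_sub, map_mul, map_truncExp, map_neg,
    aeval_truncLog_one_add_X, map_add, map_one, aeval_X, add_sub_cancel, C_1, map_one,
    sub_eq_zero] at heval

theorem truncExp_truncLog (hN : IsUnit (N ! : k)) {u : A} (hu : (u - 1) ^ (N + 1) = 0) :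
    truncExp k (N + 1) (truncLog k (N + 1) u) = u := by
  have hlog : truncLog k (N + 1) u ^ (N + 1) = 0 := truncLog_pow_eq_zero hu (N + 1)
  exact (left_inv_eq_right_inv (mul_truncExp_neg_truncLog hN hu)
    (truncExp_neg_mul_truncExp hN hlog)).symm

end Inverse

theorem saturation_GL_general {A : Type*} [Ring A] [Algebra k A] {N : ℕ} (hN : IsUnit (N ! : k))
    (u : A) (hu : (u - 1) ^ (N + 1) = 0) :
    (∀ s t : k, truncExp k (N + 1) ((s + t) • truncLog k (N + 1) u)
        = truncExp k (N + 1) (s • truncLog k (N + 1) u)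
          * truncExp k (N + 1) (t • truncLog k (N + 1) u)) ∧
    truncExp k (N + 1) ((0 : k) • truncLog k (N + 1) u) = 1 ∧
    (∀ s : k, IsUnit (truncExp k (N + 1) (s • truncLog k (N + 1) u))) ∧
    truncExp k (N + 1) ((1 : k) • truncLog k (N + 1) u) = u := by
  have hlog : truncLog k (N + 1) u ^ (N + 1) = 0 := truncLog_pow_eq_zero hu (N + 1)
  refine ⟨truncExp_add_smul hN hlog, ?_, fun s => isUnit_truncExp hN ?_, ?_⟩
  · rw [zero_smul, truncExp_succ_zero]
  · rw [_root_.smul_pow, hlog, smul_zero]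
  · rw [one_smul, truncExp_truncLog hN hu]

end

/-- Saturation for `GL_n`: every `p`-unipotent matrix `g` lies in the image of the
one-parameter additive subgroup `s ↦ E(s • L(g))`. -/
theorem saturation_GL {k : Type*} [Field k] (p : ℕ) [Fact p.Prime] [CharP k p]
    (n : ℕ) (hn : 1 ≤ n) (g : Matrix (Fin n) (Fin n) k) (hg : (g - 1) ^ p = 0) :
    (∀ s t : k, truncExp k p ((s + t) • truncLog k p g)
        = truncExp k p (s • truncLog k p g) * truncExp k p (t • truncLog k p g)) ∧
    truncExp k p ((0 : k) • truncLog k p g) = 1 ∧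
    (∀ s : k, IsUnit (truncExp k p (s • truncLog k p g))) ∧
    truncExp k p ((1 : k) • truncLog k p g) = g := by
  obtain ⟨N, rfl⟩ := Nat.exists_eq_succ_of_ne_zero (Fact.out : p.Prime).ne_zero
  exact saturation_GL_general
    ((IsUnit.natCast_factorial_iff_of_charP (N + 1)).mpr N.lt_succ_self) g hg
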